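/- arXiv:1502.07487 — 4 statements merged into one kernel-verified Lean document; each statement's English description precedes it below -/
import Mathlib

section
/- Let A, B ∈ ℝ with A² − 4B > 0 and let δ₋ < δ₊ be the two real roots of λ² − Aλ + B = 0. Let r₀ ∈ ℝ, let f : ℝ → ℝ be continuous on [r₀, ∞), and let u : ℝ → ℝ be twice differentiable on [r₀, ∞) with u''(r) + A·u'(r) + B·u(r) = f(r) for all r ≥ r₀. Suppose there exist constants C > 0, δ > δ₋ and κ > δ₊ such that |u(r)| ≤ C·e^{−δr} and |f(r)| ≤ C·e^{−κr} for all r ≥ r₀. Then there exists a constant C' > 0 such that |u(r)| ≤ C'·e^{−δ₊ r} for all r ≥ r₀. -/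
open Real MeasureTheory Set Filter

lemma aux_mono (G g : ℝ → ℝ) (r₀ C a : ℝ) (ha : 0 < a)
    (hG : ∀ r ∈ Ici r₀, HasDerivWithinAt G (g r) (Ici r₀) r)
    (hg : ∀ r ∈ Ici r₀, g r ≤ C * Real.exp (-a * r)) :
    ∀ r ∈ Ici r₀, ∀ s ∈ Ici r₀, r ≤ s →
      G s - G r ≤ C / a * Real.exp (-a * r) - C / a * Real.exp (-a * s) := by
  have hd : ∀ r ∈ Ici r₀, HasDerivWithinAt (fun r => - C / a * Real.exp (-a * r) - G r)
      (C * Real.exp (-a * r) - g r) (Ici r₀) r := by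
    intro r hr
    have h1 : HasDerivAt (fun r : ℝ => Real.exp (-a * r)) (Real.exp (-a * r) * (-a * 1)) r :=
      ((hasDerivAt_id r).const_mul (-a)).exp
    have h2 := ((h1.const_mul (-C / a)).hasDerivWithinAt (s := Ici r₀)).sub (hG r hr)
    refine h2.congr_deriv ?_
    field_simp
  have hm : MonotoneOn (fun r => - C / a * Real.exp (-a * r) - G r) (Ici r₀) := by
    apply monotoneOn_of_hasDerivWithinAt_nonneg (f' := fun r => C * Real.exp (-a * r) - g r)
      (convex_Ici r₀)
    · intro r hr
      exact (hd r hr).continuousWithinAt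
    · intro r hr
      exact (hd r (interior_subset hr)).mono interior_subset
    · intro r hr
      have := hg r (interior_subset hr)
      linarith
  intro r hr s hs hrs
  have := hm hr hs hrs
  simp only [neg_div] at this
  linarith

lemma aux_abs (G g : ℝ → ℝ) (r₀ C a : ℝ) (ha : 0 < a) (hC : 0 < C)
    (hG : ∀ r ∈ Ici r₀, HasDerivWithinAt G (g r) (Ici r₀) r)
    (hg : ∀ r ∈ Ici r₀, |g r| ≤ C * Real.exp (-a * r)) :
    ∀ r ∈ Ici r₀, ∀ s ∈ Ici r₀, r ≤ s → |G s - G r| ≤ C / a * Real.exp (-a * r) := by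
  intro r hr s hs hrs
  have h1 := aux_mono G g r₀ C a ha hG (fun r hr => (abs_le.1 (hg r hr)).2) r hr s hs hrs
  have h2 := aux_mono (fun x => - G x) (fun x => - g x) r₀ C a ha (fun r hr => (hG r hr).neg)
    (fun r hr => by have := (abs_le.1 (hg r hr)).1; linarith) r hr s hs hrs
  have h3 : 0 < C / a * Real.exp (-a * s) := by positivity
  rw [abs_le]
  constructor <;> linarith

/-- `e^{p r} (u' + q u)` has derivative `e^{p r} f` when `p + q = A`, `p q = B`. -/
lemma aux_deriv (A B p q r₀ : ℝ) (u u' u'' f : ℝ → ℝ) (hA : p + q = A) (hB : p * q = B)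
    (hu' : ∀ r ∈ Ici r₀, HasDerivWithinAt u (u' r) (Ici r₀) r)
    (hu'' : ∀ r ∈ Ici r₀, HasDerivWithinAt u' (u'' r) (Ici r₀) r)
    (hode : ∀ r ∈ Ici r₀, u'' r + A * u' r + B * u r = f r) :
    ∀ r ∈ Ici r₀, HasDerivWithinAt (fun r => Real.exp (p * r) * (u' r + q * u r))
      (Real.exp (p * r) * f r) (Ici r₀) r := by
  intro r hr
  have h1 : HasDerivAt (fun r : ℝ => Real.exp (p * r)) (Real.exp (p * r) * (p * 1)) r :=
    ((hasDerivAt_id r).const_mul p).exp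
  have h2 := (h1.hasDerivWithinAt (s := Ici r₀)).mul ((hu'' r hr).add ((hu' r hr).const_mul q))
  refine h2.congr_deriv ?_
  rw [← hode r hr, ← hA, ← hB]
  simp only [Pi.add_apply]
  ring

lemma aux_src (f : ℝ → ℝ) (r₀ C κ p : ℝ)
    (hf : ∀ r ∈ Ici r₀, |f r| ≤ C * Real.exp (-κ * r)) :
    ∀ r ∈ Ici r₀, |Real.exp (p * r) * f r| ≤ C * Real.exp (-(κ - p) * r) := by
  intro r hr
  rw [abs_mul, abs_of_pos (Real.exp_pos _)]
  calc _ ≤ Real.exp (p * r) * (C * Real.exp (-κ * r)) := by gcongr; exact hf r hr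
    _ = C * (Real.exp (p * r) * Real.exp (-κ * r)) := by ring
    _ = _ := by rw [← Real.exp_add]; ring_nf

lemma aux_tend (a b : ℝ) (h : 0 < a) :
    Tendsto (fun s : ℝ => b * Real.exp (-a * s)) atTop (nhds 0) := by
  have h1 : Tendsto (fun s : ℝ => -a * s) atTop atBot :=
    tendsto_id.const_mul_atTop_of_neg (by linarith)
  simpa using (Real.tendsto_exp_atBot.comp h1).const_mul b

/-- Lemma C.1 (i): a solution of `u'' + A u' + B u = f` which decays faster than the
fast homogeneous rate `e^{-δ₋ r}` and whose source decays faster than `e^{-δ₊ r}`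
must itself decay at rate `e^{-δ₊ r}`. -/
theorem ode_decay_part_one
    (A B δm δp r₀ δ κ C : ℝ)
    (u u' u'' f : ℝ → ℝ)
    (hdisc : A ^ 2 - 4 * B > 0)
    (hroot_m : δm ^ 2 - A * δm + B = 0)
    (hroot_p : δp ^ 2 - A * δp + B = 0)
    (hlt : δm < δp)
    (hf_cont : ContinuousOn f (Ici r₀))
    (hu' : ∀ r ∈ Ici r₀, HasDerivWithinAt u (u' r) (Ici r₀) r)
    (hu'' : ∀ r ∈ Ici r₀, HasDerivWithinAt u' (u'' r) (Ici r₀) r)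
    (hode : ∀ r ∈ Ici r₀, u'' r + A * u' r + B * u r = f r)
    (hC : 0 < C) (hδ : δm < δ) (hκ : δp < κ)
    (hu_decay : ∀ r ∈ Ici r₀, |u r| ≤ C * Real.exp (-δ * r))
    (hf_decay : ∀ r ∈ Ici r₀, |f r| ≤ C * Real.exp (-κ * r)) :
    ∃ C' > 0, ∀ r ∈ Ici r₀, |u r| ≤ C' * Real.exp (-δp * r) := by
  have hA : δp + δm = A := by
    have : (δp - δm) * (δp + δm - A) = 0 := by linarith
    rcases mul_eq_zero.1 this with h | h <;> linarith
  have hB : δp * δm = B := by rw [← hA] at hroot_p; linarith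
  have hD : 0 < δp - δm := by linarith
  have ha : 0 < κ - δp := by linarith
  have hb : 0 < κ - δm := by linarith
  have hP := aux_abs _ _ r₀ C (κ - δp) ha hC
    (aux_deriv A B δp δm r₀ u u' u'' f hA hB hu' hu'' hode) (aux_src f r₀ C κ δp hf_decay)
  have hQ := aux_abs _ _ r₀ C (κ - δm) hb hC
    (aux_deriv A B δm δp r₀ u u' u'' f (by linarith) (by linarith) hu' hu'' hode)
    (aux_src f r₀ C κ δm hf_decay)
  obtain ⟨K, hK0, hK⟩ : ∃ K > 0, ∀ r ∈ Ici r₀, |u' r + δm * u r| ≤ K * Real.exp (-δp * r) := by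
    refine ⟨|Real.exp (δp * r₀) * (u' r₀ + δm * u r₀)|
      + C / (κ - δp) * Real.exp (-(κ - δp) * r₀), by positivity, fun r hr => ?_⟩
    have h1 := hP r₀ self_mem_Ici r hr hr
    have h2 := abs_sub_abs_le_abs_sub (Real.exp (δp * r) * (u' r + δm * u r))
      (Real.exp (δp * r₀) * (u' r₀ + δm * u r₀))
    have h3 : |Real.exp (δp * r) * (u' r + δm * u r)| ≤
      |Real.exp (δp * r₀) * (u' r₀ + δm * u r₀)|
      + C / (κ - δp) * Real.exp (-(κ - δp) * r₀) := by linarith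
    rw [abs_mul, abs_of_pos (Real.exp_pos _)] at h3
    rw [neg_mul δp r, Real.exp_neg (δp * r), ← div_eq_mul_inv, le_div_iff₀ (Real.exp_pos _), mul_comm]
    exact h3
  have hQb : ∀ r ∈ Ici r₀, Real.exp (δm * r) * |u' r + δp * u r| ≤
      C / (κ - δm) * Real.exp (-(κ - δm) * r) := by
    intro r hr
    have ht : Tendsto (fun s : ℝ => C / (κ - δm) * Real.exp (-(κ - δm) * r) +
        (K * Real.exp (-(δp - δm) * s) + (δp - δm) * C * Real.exp (-(δ - δm) * s))) atTop
        (nhds (C / (κ - δm) * Real.exp (-(κ - δm) * r) + (0 + 0))) :=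
      ((aux_tend _ _ hD).add (aux_tend _ _ (by linarith))).const_add _
    rw [add_zero, add_zero] at ht
    refine ge_of_tendsto ht ?_
    filter_upwards [eventually_ge_atTop r] with s hs
    have hs0 : s ∈ Ici r₀ := le_trans (mem_Ici.1 hr) hs
    have h1 := hQ r hr s hs0 hs
    rw [abs_sub_comm] at h1
    have h2 := abs_sub_abs_le_abs_sub (Real.exp (δm * r) * (u' r + δp * u r))
      (Real.exp (δm * s) * (u' s + δp * u s))
    rw [abs_mul, abs_mul, abs_of_pos (Real.exp_pos _), abs_of_pos (Real.exp_pos _)] at h2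
    have h3 : |u' s + δp * u s| ≤
        K * Real.exp (-δp * s) + (δp - δm) * (C * Real.exp (-δ * s)) := by
      have e : u' s + δp * u s = (u' s + δm * u s) + (δp - δm) * u s := by ring
      rw [e]
      refine (abs_add_le _ _).trans (add_le_add (hK s hs0) ?_)
      rw [abs_mul, abs_of_pos hD]
      exact mul_le_mul_of_nonneg_left (hu_decay s hs0) hD.le
    have h4 := mul_le_mul_of_nonneg_left h3 (Real.exp_pos (δm * s)).le
    have e1 : Real.exp (-(δp - δm) * s) = Real.exp (δm * s) * Real.exp (-δp * s) := by
      rw [← Real.exp_add]; ring_nf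
    have e2 : Real.exp (-(δ - δm) * s) = Real.exp (δm * s) * Real.exp (-δ * s) := by
      rw [← Real.exp_add]; ring_nf
    rw [e1, e2]
    linarith
  refine ⟨(C / (κ - δm) * Real.exp (-(κ - δp) * r₀) + K) / (δp - δm), by positivity,
    fun r hr => ?_⟩
  have hv : |u' r + δp * u r| ≤
      C / (κ - δm) * Real.exp (-(κ - δp) * r₀) * Real.exp (-δp * r) := by
    have h1 := hQb r hr
    have e1 : Real.exp (-(κ - δm) * r) =
        Real.exp (δm * r) * (Real.exp (-(κ - δp) * r) * Real.exp (-δp * r)) := by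
      rw [← Real.exp_add, ← Real.exp_add]; ring_nf
    have h2 : |u' r + δp * u r| ≤
        C / (κ - δm) * (Real.exp (-(κ - δp) * r) * Real.exp (-δp * r)) := by
      refine le_of_mul_le_mul_left ?_ (Real.exp_pos (δm * r))
      rw [e1] at h1
      linarith
    have h3 : Real.exp (-(κ - δp) * r) ≤ Real.exp (-(κ - δp) * r₀) := by
      apply Real.exp_le_exp.2
      have := mul_le_mul_of_nonneg_left (mem_Ici.1 hr) ha.le
      linarith
    refine h2.trans ?_
    rw [mul_assoc]
    gcongr
  have e : (δp - δm) * u r = (u' r + δp * u r) - (u' r + δm * u r) := by ring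
  have h5 := abs_sub (u' r + δp * u r) (u' r + δm * u r)
  rw [← e, abs_mul, abs_of_pos hD] at h5
  rw [div_mul_eq_mul_div, le_div_iff₀ hD]
  linarith [hK r hr]
end

section
/- Let A, B ∈ ℝ with A² − 4B > 0 and let δ₋ < δ₊ be the two real roots of λ² − Aλ + B = 0. Let r₀ ∈ ℝ, let f : ℝ → ℝ be continuous on [r₀, ∞), and let u : ℝ → ℝ be twice differentiable on [r₀, ∞) with u''(r) + A·u'(r) + B·u(r) = f(r) for all r ≥ r₀. Suppose there exist constants C > 0, δ > δ₊ and κ > δ₊ such that |u(r)| ≤ C·e^{−δr} and |f(r)| ≤ C·e^{−κr} for all r ≥ r₀. Then there exists a constant C' > 0 such that |u(r)| ≤ C'·e^{−κ r} for all r ≥ r₀. -/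
open Real MeasureTheory Set Filter

lemma mono_aux (r₀ : ℝ) (g g' : ℝ → ℝ)
    (hg : ∀ r ∈ Ici r₀, HasDerivWithinAt g (g' r) (Ici r₀) r)
    (h : ∀ r ∈ Ici r₀, 0 ≤ g' r) : MonotoneOn g (Ici r₀) := by
  refine monotoneOn_of_hasDerivWithinAt_nonneg (f' := g') (convex_Ici r₀)
    (fun r hr => (hg r hr).continuousWithinAt) ?_ ?_
  · intro x hx
    exact (hg x (interior_subset hx)).mono interior_subset
  · intro x hx
    exact h x (interior_subset hx)

lemma exp_deriv_aux (a r : ℝ) (s : Set ℝ) :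
    HasDerivWithinAt (fun x => Real.exp (a * x)) (a * Real.exp (a * r)) s r := by
  have h := (((hasDerivAt_id r).const_mul a).exp).hasDerivWithinAt (s := s)
  simpa [mul_comm] using h

lemma one_sided (r₀ K a : ℝ) (ha : 0 < a) (hK : 0 ≤ K) (p p' : ℝ → ℝ)
    (hp : ∀ r ∈ Ici r₀, HasDerivWithinAt p (p' r) (Ici r₀) r)
    (h : ∀ r ∈ Ici r₀, - (K * Real.exp (-a * r)) ≤ p' r)
    (hno : ∀ ε > 0, ¬ ∀ᶠ r in atTop, ε ≤ p r) :
    ∀ r ∈ Ici r₀, p r ≤ K / a * Real.exp (-a * r) := by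
  intro r hr
  by_contra hc
  push Not at hc
  have hm := mono_aux r₀ (fun x => p x - K / a * Real.exp (-a * x))
    (fun x => p' x - K / a * (-a * Real.exp (-a * x)))
    (fun x hx => (hp x hx).sub ((exp_deriv_aux (-a) x _).const_mul _))
    (fun x hx => by
      have := h x hx
      have e : K / a * (-a * Real.exp (-a * x)) = - (K * Real.exp (-a * x)) := by
        field_simp
      rw [e]; linarith)
  refine hno (p r - K / a * Real.exp (-a * r)) (by linarith) ?_
  filter_upwards [eventually_ge_atTop r] with x hx
  have h1 := hm hr (le_trans (mem_Ici.1 hr) hx : r₀ ≤ x) hx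
  have h2 : 0 ≤ K / a * Real.exp (-a * x) := by positivity
  simp only at h1
  linarith

lemma two_sided (r₀ K a : ℝ) (ha : 0 < a) (hK : 0 ≤ K) (p p' : ℝ → ℝ)
    (hp : ∀ r ∈ Ici r₀, HasDerivWithinAt p (p' r) (Ici r₀) r)
    (h : ∀ r ∈ Ici r₀, |p' r| ≤ K * Real.exp (-a * r))
    (hno : ∀ ε > 0, ¬ ∀ᶠ r in atTop, ε ≤ p r)
    (hno' : ∀ ε > 0, ¬ ∀ᶠ r in atTop, ε ≤ - p r) :
    ∀ r ∈ Ici r₀, |p r| ≤ K / a * Real.exp (-a * r) := by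
  intro r hr
  have h1 := one_sided r₀ K a ha hK p p' hp (fun x hx => (abs_le.1 (h x hx)).1) hno r hr
  have h2 := one_sided r₀ K a ha hK (fun x => - p x) (fun x => - p' x)
    (fun x hx => (hp x hx).neg)
    (fun x hx => by have := (abs_le.1 (h x hx)).2; linarith) hno' r hr
  exact abs_le.2 ⟨by linarith, h1⟩

lemma no_eps (r₀ c : ℝ) (p q : ℝ → ℝ)
    (hq : ∀ r ∈ Ici r₀, HasDerivWithinAt q (p r + c * q r) (Ici r₀) r)
    (hlim : Tendsto q atTop (nhds 0)) :
    ∀ ε > 0, ¬ ∀ᶠ r in atTop, ε ≤ p r := by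
  intro ε hε hev
  have hc : Tendsto (fun r => c * q r) atTop (nhds 0) := by
    simpa using hlim.const_mul c
  have e1 : ∀ᶠ r in atTop, -(ε / 2) < c * q r := hc.eventually (lt_mem_nhds (by linarith))
  obtain ⟨R, hR⟩ := eventually_atTop.1 ((hev.and e1).and (eventually_ge_atTop r₀))
  have hR0 : r₀ ≤ R := (hR R le_rfl).2
  have hm := mono_aux R (fun x => q x - ε / 2 * x) (fun x => p x + c * q x - ε / 2 * 1)
    (fun x hx => ((hq x (hR0.trans hx)).mono (Ici_subset_Ici.2 hR0)).sub
      ((hasDerivWithinAt_id x _).const_mul _))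
    (fun x hx => by have := (hR x hx).1; linarith [this.1, this.2])
  have e2 : ∀ᶠ r in atTop, q r < 1 := hlim.eventually (gt_mem_nhds (by norm_num))
  obtain ⟨x, ⟨hx1, hx2⟩, hx3⟩ := ((e2.and (eventually_ge_atTop R)).and
    (eventually_ge_atTop (R + (1 - q R) / (ε / 2)))).exists
  have h1 := hm (mem_Ici.2 le_rfl) (mem_Ici.2 hx2) hx2
  simp only at h1
  have h2 : (1 - q R) / (ε / 2) ≤ x - R := by linarith
  rw [div_le_iff₀ (by positivity)] at h2
  nlinarith

lemma tendsto_aux (r₀ C δ d : ℝ) (hd : d < δ) (u : ℝ → ℝ)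
    (hu : ∀ r ∈ Ici r₀, |u r| ≤ C * Real.exp (-δ * r)) :
    Tendsto (fun r => Real.exp (d * r) * u r) atTop (nhds 0) := by
  have h1 : Tendsto (fun r => C * Real.exp (-((δ - d) * r))) atTop (nhds 0) := by
    have := (Real.tendsto_exp_neg_atTop_nhds_zero.comp
      (tendsto_id.const_mul_atTop (sub_pos.2 hd))).const_mul C
    simpa using this
  refine squeeze_zero_norm' ?_ h1
  filter_upwards [eventually_ge_atTop r₀] with r hr
  rw [Real.norm_eq_abs, abs_mul, abs_of_pos (Real.exp_pos _)]
  calc _ ≤ Real.exp (d * r) * (C * Real.exp (-δ * r)) := by gcongr; exact hu r hr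
    _ = C * (Real.exp (d * r) * Real.exp (-δ * r)) := by ring
    _ = _ := by rw [← Real.exp_add]; ring_nf

/-- Lemma C.1 (ii): a solution of `u'' + A u' + B u = f` which decays strictly faster
than the slow homogeneous rate `e^{-δ₊ r}` inherits the full decay rate `e^{-κ r}`
of the source term. -/
theorem ode_decay_part_two
    (A B δm δp r₀ δ κ C : ℝ)
    (u u' u'' f : ℝ → ℝ)
    (hdisc : A ^ 2 - 4 * B > 0)
    (hroot_m : δm ^ 2 - A * δm + B = 0)
    (hroot_p : δp ^ 2 - A * δp + B = 0)
    (hlt : δm < δp)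
    (hf_cont : ContinuousOn f (Ici r₀))
    (hu' : ∀ r ∈ Ici r₀, HasDerivWithinAt u (u' r) (Ici r₀) r)
    (hu'' : ∀ r ∈ Ici r₀, HasDerivWithinAt u' (u'' r) (Ici r₀) r)
    (hode : ∀ r ∈ Ici r₀, u'' r + A * u' r + B * u r = f r)
    (hC : 0 < C) (hδ : δp < δ) (hκ : δp < κ)
    (hu_decay : ∀ r ∈ Ici r₀, |u r| ≤ C * Real.exp (-δ * r))
    (hf_decay : ∀ r ∈ Ici r₀, |f r| ≤ C * Real.exp (-κ * r)) :
    ∃ C' > 0, ∀ r ∈ Ici r₀, |u r| ≤ C' * Real.exp (-κ * r) := by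
  have hA : A = δm + δp := by
    have : (δp - δm) * (δm + δp - A) = 0 := by linear_combination hroot_p - hroot_m
    rcases mul_eq_zero.1 this with h | h <;> linarith
  have hB : B = δm * δp := by subst hA; linear_combination hroot_m
  have hlimp := tendsto_aux r₀ C δ δp hδ u hu_decay
  have hlimm := tendsto_aux r₀ C δ δm (hlt.trans hδ) u hu_decay
  -- `p = e^{δp r} (u' + δm u)`
  set p : ℝ → ℝ := fun r => Real.exp (δp * r) * (u' r + δm * u r) with hpdef
  set q : ℝ → ℝ := fun r => Real.exp (δp * r) * u r with hqdef
  have hp : ∀ r ∈ Ici r₀, HasDerivWithinAt p (Real.exp (δp * r) * f r) (Ici r₀) r := by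
    intro r hr
    refine ((exp_deriv_aux δp r _).mul
      ((hu'' r hr).add ((hu' r hr).const_mul δm))).congr_deriv ?_
    rw [← hode r hr, hA, hB]
    simp only [Pi.add_apply]
    ring
  have hq : ∀ r ∈ Ici r₀,
      HasDerivWithinAt q (p r + (δp - δm) * q r) (Ici r₀) r := by
    intro r hr
    refine ((exp_deriv_aux δp r _).mul (hu' r hr)).congr_deriv ?_
    simp only [hpdef, hqdef]
    ring
  have hq' : ∀ r ∈ Ici r₀,
      HasDerivWithinAt (fun x => - q x) (- p r + (δp - δm) * (- q r)) (Ici r₀) r := by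
    intro r hr
    exact (hq r hr).neg.congr_deriv (by ring)
  have hpb := two_sided r₀ C (κ - δp) (by linarith) hC.le p _ hp
    (fun r hr => by
      rw [abs_mul, abs_of_pos (Real.exp_pos _)]
      calc _ ≤ Real.exp (δp * r) * (C * Real.exp (-κ * r)) := by gcongr; exact hf_decay r hr
        _ = C * (Real.exp (δp * r) * Real.exp (-κ * r)) := by ring
        _ = _ := by rw [← Real.exp_add]; ring_nf)
    (no_eps r₀ (δp - δm) p q hq hlimp)
    (no_eps r₀ (δp - δm) (fun x => - p x) (fun x => - q x) hq' (by simpa using hlimp.neg))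
  have hK : 0 < C / (κ - δp) := div_pos hC (by linarith)
  have hκm : 0 < κ - δm := by linarith
  have no1 : ∀ g : ℝ → ℝ, Tendsto g atTop (nhds 0) → ∀ ε > 0, ¬ ∀ᶠ r in atTop, ε ≤ g r := by
    intro g hg ε hε hev
    obtain ⟨x, h1, h2⟩ := (hev.and (hg.eventually (gt_mem_nhds hε))).exists
    linarith
  have hgb := two_sided r₀ (C / (κ - δp)) (κ - δm) hκm hK.le
    (fun r => Real.exp (δm * r) * u r) (fun r => Real.exp ((δm - δp) * r) * p r)
    (fun r hr => by
      refine ((exp_deriv_aux δm r _).mul (hu' r hr)).congr_deriv ?_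
      simp only [hpdef]
      rw [← mul_assoc, ← Real.exp_add, show (δm - δp) * r + δp * r = δm * r by ring]
      ring)
    (fun r hr => by
      rw [abs_mul, abs_of_pos (Real.exp_pos _)]
      calc _ ≤ Real.exp ((δm - δp) * r) *
              (C / (κ - δp) * Real.exp (-(κ - δp) * r)) := by gcongr; exact hpb r hr
        _ = C / (κ - δp) * (Real.exp ((δm - δp) * r) * Real.exp (-(κ - δp) * r)) := by ring
        _ = _ := by rw [← Real.exp_add]; ring_nf)
    (no1 _ hlimm) (no1 _ (by simpa using hlimm.neg))
  refine ⟨C / (κ - δp) / (κ - δm), div_pos hK hκm, fun r hr => ?_⟩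
  have h1 := hgb r hr
  rw [abs_mul, abs_of_pos (Real.exp_pos _)] at h1
  have e : Real.exp (-(κ - δm) * r) = Real.exp (δm * r) * Real.exp (-κ * r) := by
    rw [← Real.exp_add]; ring_nf
  rw [e, mul_left_comm] at h1
  exact le_of_mul_le_mul_left h1 (Real.exp_pos _)
end

section
/- Let α > −2, r₀ > 0, C > 0, and let f : ℝ → ℝ be continuous on [r₀, ∞) with |f(r)| ≤ C·e^{−αr} for all r ≥ r₀. Let x : ℝ → ℝ be differentiable on [r₀, ∞) with x'(r) = 2·coth(r)·x(r) + f(r) for all r ≥ r₀, and suppose that e^{−2r}·x(r) → 0 as r → ∞. Then for all r ≥ r₀ one has x(r) = − sinh²(r)·∫_r^∞ f(s)/sinh²(s) ds, and there exists C' > 0 such that |x(r)| ≤ C'·e^{−αr} for all r ≥ r₀. -/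
open Real MeasureTheory Set Filter

/-- Representation formula and decay estimate for the first-order ODE
`x' = 2 coth(r) x + f` with exponentially decaying source, assuming the sub-critical
growth condition `e^{-2r} x(r) → 0`. -/
theorem first_order_ode_tangential_decay
    (α r₀ C : ℝ) (f x : ℝ → ℝ)
    (hα : -2 < α) (hr₀ : 0 < r₀) (hC : 0 < C)
    (hf_cont : ContinuousOn f (Ici r₀))
    (hf_decay : ∀ r ∈ Ici r₀, |f r| ≤ C * Real.exp (-α * r))
    (hx : ∀ r ∈ Ici r₀,
      HasDerivWithinAt x (2 * (Real.cosh r / Real.sinh r) * x r + f r) (Ici r₀) r)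
    (hlim : Tendsto (fun r => Real.exp (-2 * r) * x r) atTop (nhds 0)) :
    (∀ r ∈ Ici r₀,
      IntegrableOn (fun s => f s / (Real.sinh s) ^ 2) (Ici r) ∧
      x r = -(Real.sinh r) ^ 2 * ∫ s in Ici r, f s / (Real.sinh s) ^ 2) ∧
    ∃ C' > 0, ∀ r ∈ Ici r₀, |x r| ≤ C' * Real.exp (-α * r) := by
  obtain ⟨k, hk, hks⟩ : ∃ k > 0, ∀ s ∈ Ici r₀, k * Real.exp s ≤ Real.sinh s := by
    refine ⟨(1 - Real.exp (-2 * r₀)) / 2, ?_, ?_⟩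
    · have : Real.exp (-2 * r₀) < 1 := Real.exp_lt_one_iff.mpr (by linarith)
      linarith
    · intro s hs
      have hs' : r₀ ≤ s := hs
      rw [Real.sinh_eq]
      have h1 : Real.exp (-s) ≤ Real.exp (-2 * r₀) * Real.exp s := by
        rw [← Real.exp_add]
        exact Real.exp_le_exp.mpr (by linarith)
      linarith
  have hpos : ∀ s ∈ Ici r₀, 0 < Real.sinh s := fun s hs =>
    Real.sinh_pos_iff.mpr (lt_of_lt_of_le hr₀ hs)
  have hsq : ∀ s ∈ Ici r₀, k ^ 2 * Real.exp (2 * s) ≤ Real.sinh s ^ 2 := by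
    intro s hs
    have h := pow_le_pow_left₀ (by positivity) (hks s hs) 2
    have e : Real.exp (2 * s) = Real.exp s ^ 2 := by
      rw [← Real.exp_nat_mul]; norm_num
    rw [e, ← mul_pow]; exact h
  have hsq' : ∀ s ∈ Ici r₀, Real.sinh s ^ 2 ≤ Real.exp (2 * s) := by
    intro s hs
    have h1 : Real.sinh s ≤ Real.exp s := by
      rw [Real.sinh_eq]
      linarith [Real.exp_pos s, Real.exp_pos (-s)]
    have h := pow_le_pow_left₀ (hpos s hs).le h1 2
    have e : Real.exp (2 * s) = Real.exp s ^ 2 := by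
      rw [← Real.exp_nat_mul]; norm_num
    rw [e]; exact h
  have hbd : ∀ s ∈ Ici r₀,
      ‖f s / Real.sinh s ^ 2‖ ≤ C / k ^ 2 * Real.exp (-(α + 2) * s) := by
    intro s hs
    have hp := hpos s hs
    rw [Real.norm_eq_abs, abs_div, abs_of_pos (pow_pos hp 2)]
    calc |f s| / Real.sinh s ^ 2
        ≤ (C * Real.exp (-α * s)) / (k ^ 2 * Real.exp (2 * s)) :=
          div_le_div₀ (by positivity) (hf_decay s hs) (by positivity) (hsq s hs)
      _ = C / k ^ 2 * Real.exp (-(α + 2) * s) := by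
          have : -α * s = -(α + 2) * s + 2 * s := by ring
          rw [this, Real.exp_add]
          field_simp
  have hneg : -(α + 2) < 0 := by linarith
  have hgint : ∀ r, IntegrableOn
      (fun s => C / k ^ 2 * Real.exp (-(α + 2) * s)) (Ioi r) := fun r =>
    (integrableOn_exp_mul_Ioi hneg r).const_mul _
  have hcont : ContinuousOn (fun s => f s / Real.sinh s ^ 2) (Ici r₀) :=
    hf_cont.div (Real.continuous_sinh.pow 2).continuousOn
      (fun s hs => (pow_pos (hpos s hs) 2).ne')
  have hint : ∀ r ∈ Ici r₀, IntegrableOn (fun s => f s / Real.sinh s ^ 2) (Ioi r) := by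
    intro r hr
    have hsub : Ioi r ⊆ Ici r₀ := fun s hs => mem_Ici.mpr (le_trans (mem_Ici.mp hr) (le_of_lt (mem_Ioi.mp hs)))
    refine Integrable.mono' (hgint r)
      ((hcont.mono hsub).aestronglyMeasurable measurableSet_Ioi) ?_
    exact (ae_restrict_iff' measurableSet_Ioi).mpr
      (Eventually.of_forall fun s hs => hbd s (hsub hs))
  have hyd : ∀ r ∈ Ici r₀, HasDerivWithinAt (fun s => x s / Real.sinh s ^ 2)
      (f r / Real.sinh r ^ 2) (Ici r₀) r := by
    intro r hr
    have hp := (hpos r hr).ne'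
    have h := (hx r hr).div ((Real.hasDerivAt_sinh r).pow 2).hasDerivWithinAt (pow_ne_zero 2 hp)
    refine HasDerivWithinAt.congr_deriv h ?_
    simp only [Pi.pow_apply]
    field_simp
    ring
  have hylim : Tendsto (fun s => x s / Real.sinh s ^ 2) atTop (nhds 0) := by
    have h0 : Tendsto (fun r => |Real.exp (-2 * r) * x r| / k ^ 2) atTop (nhds 0) := by
      simpa using hlim.abs.div_const (k ^ 2)
    refine squeeze_zero_norm' ?_ h0
    filter_upwards [eventually_ge_atTop r₀] with s hs
    have hp := hpos s hs
    rw [Real.norm_eq_abs, abs_div, abs_of_pos (pow_pos hp 2), abs_mul,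
      abs_of_pos (Real.exp_pos _)]
    calc |x s| / Real.sinh s ^ 2 ≤ |x s| / (k ^ 2 * Real.exp (2 * s)) :=
          div_le_div_of_nonneg_left (abs_nonneg _) (by positivity) (hsq s hs)
      _ = Real.exp (-2 * s) * |x s| / k ^ 2 := by
          rw [neg_mul, Real.exp_neg]
          field_simp
  have hrep : ∀ r ∈ Ici r₀,
      x r = -(Real.sinh r) ^ 2 * ∫ s in Ioi r, f s / (Real.sinh s) ^ 2 := by
    intro r hr
    have hr' : r₀ ≤ r := hr
    have h := integral_Ioi_of_hasDerivAt_of_tendsto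
      (((hyd r hr).continuousWithinAt).mono (Ici_subset_Ici.mpr hr'))
      (fun s hs => (hyd s (le_trans hr' (le_of_lt hs))).hasDerivAt
        (Ici_mem_nhds (lt_of_le_of_lt hr' hs))) (hint r hr) hylim
    rw [h]
    have hp := (hpos r hr).ne'
    field_simp
    ring
  refine ⟨fun r hr => ⟨(integrableOn_Ici_iff_integrableOn_Ioi).mpr (hint r hr), ?_⟩, ?_⟩
  · rw [integral_Ici_eq_integral_Ioi]
    exact hrep r hr
  · have h2 : 0 < α + 2 := by linarith
    refine ⟨C / k ^ 2 / (α + 2), by positivity, fun r hr => ?_⟩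
    have hI : ‖∫ s in Ioi r, f s / (Real.sinh s) ^ 2‖ ≤
        C / k ^ 2 * (-Real.exp (-(α + 2) * r) / -(α + 2)) := by
      rw [← integral_exp_mul_Ioi hneg r, ← integral_const_mul]
      exact norm_integral_le_of_norm_le (hgint r)
        ((ae_restrict_iff' measurableSet_Ioi).mpr
          (Eventually.of_forall fun s hs => hbd s (mem_Ici.mpr (le_trans (mem_Ici.mp hr) (le_of_lt (mem_Ioi.mp hs))))))
    rw [hrep r hr, abs_mul, abs_neg, abs_of_pos (pow_pos (hpos r hr) 2)]
    calc Real.sinh r ^ 2 * |∫ s in Ioi r, f s / (Real.sinh s) ^ 2|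
        ≤ Real.exp (2 * r) * (C / k ^ 2 * (-Real.exp (-(α + 2) * r) / -(α + 2))) :=
          mul_le_mul (hsq' r hr) hI (abs_nonneg _) (Real.exp_pos _).le
      _ = C / k ^ 2 / (α + 2) * Real.exp (-α * r) := by
          have : -α * r = -(α + 2) * r + 2 * r := by ring
          rw [this, Real.exp_add, neg_div_neg_eq]
          field_simp
end

section
/- Let (X, μ) be a measure space, let ρ : X → ℝ be measurable, let h, k : X → [0, ∞] be measurable, and let a ∈ ℝ, c ≥ 0, C ≥ 0, t₀ ∈ ℝ. Suppose that ∫_{\{a−1 ≤ ρ < a\}} k dμ < ∞ and that for every t ≥ t₀ one has (t³ − c)·∫_{\{ρ ≥ a\}} e^{2tρ(x)} h(x) dμ(x) ≤ C·∫_{\{a−1 ≤ ρ < a\}} e^{2tρ(x)} k(x) dμ(x). Then h = 0 μ-almost everywhere on the set {ρ ≥ a}. -/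
open Real MeasureTheory Set Filter ENNReal

/-- Abstract mechanism of the unique continuation argument: if a Carleman-type
inequality `(t³ - c) ∫_{ρ ≥ a} e^{2tρ} h ≤ C ∫_{a-1 ≤ ρ < a} e^{2tρ} k` holds for all
large `t`, then `h` vanishes almost everywhere on `{ρ ≥ a}`. -/
theorem carleman_forces_vanishing
    {X : Type*} [MeasurableSpace X] (μ : Measure X)
    (ρ : X → ℝ) (h k : X → ℝ≥0∞) (a c C t₀ : ℝ)
    (hρ : Measurable ρ) (hh : Measurable h) (hk : Measurable k)
    (hc : 0 ≤ c) (hC : 0 ≤ C)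
    (hfin : ∫⁻ x in {x | a - 1 ≤ ρ x ∧ ρ x < a}, k x ∂μ < ⊤)
    (hineq : ∀ t ≥ t₀,
      ENNReal.ofReal (t ^ 3 - c) *
          ∫⁻ x in {x | a ≤ ρ x}, ENNReal.ofReal (Real.exp (2 * t * ρ x)) * h x ∂μ
        ≤ ENNReal.ofReal C *
          ∫⁻ x in {x | a - 1 ≤ ρ x ∧ ρ x < a},
            ENNReal.ofReal (Real.exp (2 * t * ρ x)) * k x ∂μ) :
    ∀ᵐ x ∂(μ.restrict {x | a ≤ ρ x}), h x = 0 := by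
  have hA : MeasurableSet {x | a ≤ ρ x} := measurableSet_le measurable_const hρ
  have hB : MeasurableSet {x | a - 1 ≤ ρ x ∧ ρ x < a} :=
    (measurableSet_le measurable_const hρ).inter (measurableSet_lt hρ measurable_const)
  have key : ∀ t : ℝ, t₀ ≤ t → 0 ≤ t →
      ENNReal.ofReal (t ^ 3 - c) * ∫⁻ x in {x | a ≤ ρ x}, h x ∂μ
        ≤ ENNReal.ofReal C * ∫⁻ x in {x | a - 1 ≤ ρ x ∧ ρ x < a}, k x ∂μ := by
    intro t ht ht0
    set E := ENNReal.ofReal (Real.exp (2 * t * a)) with hE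
    have hE0 : E ≠ 0 := by
      rw [hE]
      exact (ENNReal.ofReal_pos.2 (Real.exp_pos _)).ne'
    have hEt : E ≠ ⊤ := ENNReal.ofReal_ne_top
    have h1 : E * ∫⁻ x in {x | a ≤ ρ x}, h x ∂μ ≤
        ∫⁻ x in {x | a ≤ ρ x}, ENNReal.ofReal (Real.exp (2 * t * ρ x)) * h x ∂μ := by
      rw [← lintegral_const_mul _ hh]
      refine setLIntegral_mono' hA fun x hx => ?_
      have hx' : a ≤ ρ x := hx
      gcongr
      rw [hE]
      gcongr
    have h2 : ∫⁻ x in {x | a - 1 ≤ ρ x ∧ ρ x < a},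
          ENNReal.ofReal (Real.exp (2 * t * ρ x)) * k x ∂μ ≤
        E * ∫⁻ x in {x | a - 1 ≤ ρ x ∧ ρ x < a}, k x ∂μ := by
      rw [← lintegral_const_mul _ hk]
      refine setLIntegral_mono' hB fun x hx => ?_
      have hx' : ρ x ≤ a := hx.2.le
      gcongr
      rw [hE]
      gcongr
    have h3 := (mul_le_mul_right h1 (ENNReal.ofReal (t ^ 3 - c))).trans
      ((hineq t ht).trans (mul_le_mul_right h2 (ENNReal.ofReal C)))
    rw [mul_left_comm, mul_left_comm (ENNReal.ofReal C)] at h3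
    exact (ENNReal.mul_le_mul_iff_right hE0 hEt).1 h3
  have hH : ∫⁻ x in {x | a ≤ ρ x}, h x ∂μ = 0 := by
    by_contra hne
    have hlim : Tendsto (fun t : ℝ => ENNReal.ofReal (t ^ 3 - c)) atTop (nhds ⊤) :=
      ENNReal.tendsto_ofReal_atTop.comp
        (tendsto_atTop_add_const_right _ (-c) (tendsto_pow_atTop (by norm_num)))
    have hlim2 := ENNReal.Tendsto.mul_const
      (b := ∫⁻ x in {x | a ≤ ρ x}, h x ∂μ) hlim (Or.inl ENNReal.top_ne_zero)
    rw [ENNReal.top_mul hne] at hlim2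
    have hle := le_of_tendsto hlim2 (by
      filter_upwards [eventually_ge_atTop t₀, eventually_ge_atTop 0] with t h1 h2
      exact key t h1 h2)
    exact absurd hle (not_le.2 (ENNReal.mul_lt_top ENNReal.ofReal_lt_top hfin))
  exact (lintegral_eq_zero_iff hh).1 hH
end
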